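/- Let d ≥ 1 and let a, b ∈ ℤ[X] with deg a = d, deg b = 2d, positive leading coefficients A and B, and a(n) > 0, b(n) > 0 for all integers n ≥ 1. Let p, q be the convergents of PCF[a,b] and let α = (A + √(A² + 4B))/2 be the larger root of x² = Ax + B (so B < α²). Then the limit L = lim_{n→∞} p_n/q_n exists, L ≠ p_n/q_n for all n, and lim_{n→∞} (1/n)·ln|L − p_n/q_n| = ln B − 2·ln α; i.e., the convergence error satisfies |L − p_n/q_n| ≐ (B/α²)^n. -/

import Mathlib

open Filter Polynomial

lemma aux_one_step (v E : ℕ → ℝ) (μ : ℝ) (hμ0 : 0 ≤ μ) (hμ : μ < 1) (hv : ∀ n, 0 ≤ v n)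
    (hE : Tendsto E atTop (nhds 0)) (h : ∀ᶠ n in atTop, v (n + 1) ≤ μ * v n + E n) :
    Tendsto v atTop (nhds 0) := by
  rw [Metric.tendsto_atTop]
  intro ε hε
  have h1 : ∀ᶠ n in atTop, E n < (1 - μ) * (ε / 2) :=
    hE.eventually (gt_mem_nhds (mul_pos (by linarith) (by linarith)))
  obtain ⟨N, hN⟩ := eventually_atTop.1 (h.and h1)
  have key : ∀ k, v (N + k) ≤ ε / 2 + μ ^ k * v N := by
    intro k
    induction k with
    | zero => simp; linarith
    | succ k ih =>
      have := hN (N + k) (by omega)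
      have h3 := mul_le_mul_of_nonneg_left ih hμ0
      rw [← add_assoc, pow_succ]
      nlinarith [this.1, this.2]
  have h2 : Tendsto (fun k => μ ^ k * v N) atTop (nhds 0) := by
    simpa using (tendsto_pow_atTop_nhds_zero_of_lt_one hμ0 hμ).mul_const (v N)
  obtain ⟨K, hK⟩ := eventually_atTop.1 (h2.eventually (gt_mem_nhds (show (0:ℝ) < ε / 2 by linarith)))
  refine ⟨N + K, fun n hn => ?_⟩
  obtain ⟨k, rfl⟩ := Nat.exists_eq_add_of_le (show N ≤ n by omega)
  have h4 := hK k (by omega)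
  have h5 := key k
  rw [Real.dist_eq, sub_zero, abs_of_nonneg (hv _)]
  linarith

lemma aux_ratio (s β : ℕ → ℝ) (t : ℝ) (ht : 1 < t) (hβ : ∀ n, 0 < β n) (hs0 : s 0 = 1)
    (hs : ∀ n, s (n + 1) = 1 + β n / s n) (hlim : Tendsto β atTop (nhds (t * (t - 1)))) :
    Tendsto s atTop (nhds t) := by
  have hs1 : ∀ n, 1 ≤ s n := by
    intro n
    induction n with
    | zero => rw [hs0]
    | succ n ih =>
      rw [hs]
      have : 0 < β n / s n := div_pos (hβ n) (by linarith)
      linarith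
  set e : ℕ → ℝ := fun n => |β n - t * (t - 1)| with he
  have he0 : Tendsto e atTop (nhds 0) := by
    have := (hlim.sub_const (t * (t - 1))).abs
    simpa using this
  set D : ℕ → ℝ := fun n => |s n - t| with hD
  have hD0 : ∀ n, 0 ≤ D n := fun n => abs_nonneg _
  have hen : ∀ n, 0 ≤ e n := fun n => abs_nonneg _
  have step : ∀ n, s n * D (n + 1) ≤ e n + (t - 1) * D n := by
    intro n
    have hp : 0 < s n := by linarith [hs1 n]
    have h1 : s n * (s (n + 1) - t) = (β n - t * (t - 1)) - (t - 1) * (s n - t) := by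
      rw [hs]; field_simp; ring
    have h2 : s n * D (n + 1) = |s n * (s (n + 1) - t)| := by
      rw [abs_mul, abs_of_pos hp]
    rw [h2, h1]
    refine (abs_sub _ _).trans ?_
    rw [abs_mul, abs_of_pos (show 0 < t - 1 by linarith)]
  have step1 : ∀ n, D (n + 1) ≤ e n + (t - 1) * D n := by
    intro n
    nlinarith [step n, hs1 n, hD0 (n + 1)]
  -- the contraction constant
  set M : ℝ := t ^ 2 - t + 1 - t / 2 with hM
  have hMpos : 0 < M := by rw [hM]; nlinarith [sq_nonneg (t - 1)]
  set κ : ℝ := (t - 1) ^ 2 / M with hκ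
  have hκ0 : 0 ≤ κ := by positivity
  have hκ1 : κ < 1 := by
    rw [hκ, div_lt_one hMpos, hM]; nlinarith
  set μ := Real.sqrt κ with hμ
  have hμ2 : μ * μ = κ := Real.mul_self_sqrt hκ0
  have hμ0 : 0 ≤ μ := Real.sqrt_nonneg _
  have hμ1 : μ < 1 := by nlinarith
  have hev : ∀ᶠ n in atTop, M - 1 < β n := by
    apply hlim.eventually (lt_mem_nhds _)
    rw [hM]; nlinarith
  have two : ∀ᶠ n in atTop, D (n + 2) ≤ κ * D n + (e (n + 1) + (t - 1) * e n) := by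
    filter_upwards [hev] with n hn
    have hp : 0 < s n := by linarith [hs1 n]
    have hprod : s n * s (n + 1) = s n + β n := by rw [hs]; field_simp
    have hMle : M ≤ s n * s (n + 1) := by rw [hprod]; linarith [hs1 n]
    have hP : 1 ≤ s n * s (n + 1) := by rw [hprod]; linarith [hs1 n, hβ n]
    have hsle : s n ≤ s n * s (n + 1) := by nlinarith [hs1 (n + 1)]
    have h3 : s n * s (n + 1) * D (n + 2) ≤
        s n * e (n + 1) + (t - 1) * (e n + (t - 1) * D n) := by
      have := mul_le_mul_of_nonneg_left (step (n + 1)) hp.le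
      have h4 := mul_le_mul_of_nonneg_left (step n) (show 0 ≤ t - 1 by linarith)
      nlinarith
    have hκM : (t - 1) ^ 2 = κ * M := by rw [hκ]; field_simp
    have hPpos : 0 < s n * s (n + 1) := by linarith
    refine le_of_mul_le_mul_left (h3.trans ?_) hPpos
    generalize s n * s (n + 1) = P at *
    have i1 : s n * e (n + 1) ≤ P * e (n + 1) := mul_le_mul_of_nonneg_right hsle (hen _)
    have i2 : (t - 1) * e n ≤ P * ((t - 1) * e n) :=
      le_mul_of_one_le_left (mul_nonneg (by linarith) (hen _)) hP
    have i3 : (t - 1) ^ 2 * D n ≤ P * (κ * D n) := by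
      rw [hκM]
      have := mul_le_mul_of_nonneg_right hMle (mul_nonneg hκ0 (hD0 n))
      linarith
    linarith
  have hv : Tendsto (fun n => D (n + 1) + μ * D n) atTop (nhds 0) := by
    apply aux_one_step _ (fun n => e (n + 1) + (t - 1) * e n) μ hμ0 hμ1
    · intro n
      have := hD0 n
      have := hD0 (n + 1)
      positivity
    · have := ((tendsto_add_atTop_iff_nat 1).2 he0).add (he0.const_mul (t - 1))
      simpa using this
    · filter_upwards [two] with n hn
      rw [← hμ2] at hn
      have : D (n + 1 + 1) = D (n + 2) := rfl
      rw [this]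
      linarith
  have hD1 : Tendsto (fun n => D (n + 1)) atTop (nhds 0) := by
    refine squeeze_zero (fun n => hD0 _) (fun n => ?_) hv
    have := mul_nonneg hμ0 (hD0 n)
    linarith
  have hD2 : Tendsto D atTop (nhds 0) := (tendsto_add_atTop_iff_nat 1).1 hD1
  rw [tendsto_iff_dist_tendsto_zero]
  exact hD2

lemma aux_alt (x c : ℕ → ℝ) (ρ : ℝ) (hρ0 : 0 < ρ) (hρ : ρ < 1) (hc : ∀ n, 0 < c n)
    (hdec : ∀ n, c (n + 1) < c n) (hx : ∀ n, x (n + 1) - x n = (-1) ^ n * c n)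
    (hr : Tendsto (fun n => c (n + 1) / c n) atTop (nhds ρ)) :
    ∃ L : ℝ, Tendsto x atTop (nhds L) ∧ (∀ n, L ≠ x n) ∧
      Tendsto (fun n : ℕ => (1 : ℝ) / n * Real.log |L - x n|) atTop (nhds (Real.log ρ)) := by
  have hsum : Summable c := by
    apply summable_of_ratio_test_tendsto_lt_one hρ
    · exact Eventually.of_forall fun n => (hc n).ne'
    · simpa [Real.norm_eq_abs, abs_of_pos (hc _)] using hr
  have hcau : CauchySeq x := by
    apply cauchySeq_of_summable_dist
    refine hsum.congr fun n => ?_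
    rw [dist_comm, Real.dist_eq, hx, abs_mul, abs_pow, abs_neg, abs_one, one_pow, one_mul,
      abs_of_pos (hc n)]
  obtain ⟨L, hL⟩ := cauchySeq_tendsto_of_complete hcau
  have hid : ∀ n y, (-1 : ℝ) ^ n * (y - x n) = c n - (-1) ^ (n + 1) * (y - x (n + 1)) := by
    intro n y
    have h1 : x (n + 1) = x n + (-1) ^ n * c n := by linarith [hx n]
    have h2 : ((-1 : ℝ) ^ n) * (-1) ^ n = 1 := by
      rw [← mul_pow]; simp
    rw [h1, pow_succ]
    linear_combination (c n) * h2
  have hb : ∀ k n, 0 ≤ (-1 : ℝ) ^ n * (x (n + k) - x n) ∧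
      (-1 : ℝ) ^ n * (x (n + k) - x n) ≤ c n := by
    intro k
    induction k with
    | zero => intro n; simp [(hc n).le]
    | succ k ih =>
      intro n
      have := ih (n + 1)
      rw [hid, show n + (k + 1) = n + 1 + k by ring]
      have := hdec n
      constructor <;> linarith
  have hbL : ∀ n, 0 ≤ (-1 : ℝ) ^ n * (L - x n) ∧ (-1 : ℝ) ^ n * (L - x n) ≤ c n := by
    intro n
    have ht : Tendsto (fun k => (-1 : ℝ) ^ n * (x (n + k) - x n)) atTop
        (nhds ((-1 : ℝ) ^ n * (L - x n))) := by
      apply Tendsto.const_mul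
      apply Tendsto.sub_const
      have := (tendsto_add_atTop_iff_nat n).2 hL
      simpa [add_comm] using this
    exact ⟨ge_of_tendsto' ht fun k => (hb k n).1, le_of_tendsto' ht fun k => (hb k n).2⟩
  have habs : ∀ n, |L - x n| = (-1 : ℝ) ^ n * (L - x n) := by
    intro n
    rw [← abs_of_nonneg (hbL n).1, abs_mul, abs_pow, abs_neg, abs_one, one_pow, one_mul]
  have hlow : ∀ n, c n - c (n + 1) ≤ |L - x n| := by
    intro n
    rw [habs, hid]
    linarith [(hbL (n + 1)).2]
  have hup : ∀ n, |L - x n| ≤ c n := fun n => by rw [habs]; exact (hbL n).2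
  have hpos : ∀ n, 0 < |L - x n| := fun n => by linarith [hlow n, hdec n]
  refine ⟨L, hL, fun n h => ?_, ?_⟩
  · have := hpos n
    rw [h] at this
    simp at this
  have hlogr : Tendsto (fun n => Real.log (c (n + 1)) - Real.log (c n)) atTop
      (nhds (Real.log ρ)) := by
    have := (Real.continuousAt_log hρ0.ne').tendsto.comp hr
    refine this.congr fun n => ?_
    exact Real.log_div (hc _).ne' (hc _).ne'
  have hces := hlogr.cesaro
  have hone : Tendsto (fun n : ℕ => (1 : ℝ) / n) atTop (nhds 0) :=
    tendsto_one_div_atTop_nhds_zero_nat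
  have hlogc : Tendsto (fun n : ℕ => (1 : ℝ) / n * Real.log (c n)) atTop (nhds (Real.log ρ)) := by
    have := hces.add (hone.mul_const (Real.log (c 0)))
    rw [zero_mul, add_zero] at this
    refine this.congr fun n => ?_
    rw [Finset.sum_range_sub (fun n => Real.log (c n))]
    ring
  have hl1 : Tendsto (fun n : ℕ => (1 : ℝ) / n * Real.log (c n - c (n + 1))) atTop
      (nhds (Real.log ρ)) := by
    have h1 : Tendsto (fun n => Real.log (1 - c (n + 1) / c n)) atTop (nhds (Real.log (1 - ρ))) :=
      (Real.continuousAt_log (sub_pos.2 hρ).ne').tendsto.comp (hr.const_sub 1)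
    have := hlogc.add (hone.mul h1)
    rw [zero_mul, add_zero] at this
    refine this.congr fun n => ?_
    have hcn := hc n
    have h3 : c n - c (n + 1) = c n * (1 - c (n + 1) / c n) := by field_simp
    have h4 : 0 < 1 - c (n + 1) / c n := by
      rw [sub_pos, div_lt_one hcn]; exact hdec n
    rw [h3, Real.log_mul hcn.ne' h4.ne']
    ring
  refine tendsto_of_tendsto_of_tendsto_of_le_of_le hl1 hlogc (fun n => ?_) (fun n => ?_)
  · exact mul_le_mul_of_nonneg_left
      (Real.log_le_log (by linarith [hdec n]) (hlow n)) (by positivity)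
  · exact mul_le_mul_of_nonneg_left (Real.log_le_log (hpos n) (hup n)) (by positivity)

lemma aux_poly (a b : Polynomial ℤ) (hdb : b.natDegree = 2 * a.natDegree)
    (hA : 0 < a.leadingCoeff) (hB : 0 < b.leadingCoeff) :
    Tendsto (fun n : ℕ => ((b.eval ((n : ℤ) + 2) : ℤ) : ℝ) /
      (((a.eval ((n : ℤ) + 2) : ℤ) : ℝ) * ((a.eval ((n : ℤ) + 1) : ℤ) : ℝ))) atTop
      (nhds ((b.leadingCoeff : ℝ) / (a.leadingCoeff : ℝ) ^ 2)) := by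
  have hinj : Function.Injective (Int.castRingHom ℝ) := Int.cast_injective
  have ha0 : a ≠ 0 := by rintro rfl; simp at hA
  have hb0 : b ≠ 0 := by rintro rfl; simp at hB
  set P := (b.comp (X + C 2)) with hP
  set Q := (a.comp (X + C 2)) * (a.comp (X + C 1)) with hQ
  have n2 : (X + C 2 : Polynomial ℤ).natDegree = 1 := natDegree_X_add_C 2
  have n1 : (X + C 1 : Polynomial ℤ).natDegree = 1 := natDegree_X_add_C 1
  have lP : P.leadingCoeff = b.leadingCoeff := by
    rw [hP, leadingCoeff_comp (by rw [n2]; simp), leadingCoeff_X_add_C]; simp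
  have lQ : Q.leadingCoeff = a.leadingCoeff ^ 2 := by
    rw [hQ, leadingCoeff_mul, leadingCoeff_comp (by rw [n2]; simp),
      leadingCoeff_comp (by rw [n1]; simp), leadingCoeff_X_add_C, leadingCoeff_X_add_C]
    simp [sq]
  have hP0 : P ≠ 0 := by rw [← leadingCoeff_ne_zero, lP]; exact hB.ne'
  have hQ0 : Q ≠ 0 := by rw [← leadingCoeff_ne_zero, lQ]; positivity
  have ha1 : a.comp (X + C 2) ≠ 0 := left_ne_zero_of_mul hQ0
  have ha2 : a.comp (X + C 1) ≠ 0 := right_ne_zero_of_mul hQ0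
  have hdeg : P.degree = Q.degree := by
    rw [degree_eq_natDegree hP0, degree_eq_natDegree hQ0, hQ, natDegree_mul ha1 ha2, hP,
      natDegree_comp, natDegree_comp, natDegree_comp, n1, n2, hdb]
    congr 1
    ring
  have := Polynomial.div_tendsto_atTop_leadingCoeff_div_of_degree_eq
    (P.map (Int.castRingHom ℝ)) (Q.map (Int.castRingHom ℝ))
    (by rw [degree_map_eq_of_injective hinj, degree_map_eq_of_injective hinj, hdeg])
  rw [leadingCoeff_map_of_injective hinj, leadingCoeff_map_of_injective hinj, lP, lQ] at this
  have h2 := this.comp (tendsto_natCast_atTop_atTop (R := ℝ))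
  have h3 : ∀ (R : Polynomial ℤ) (n : ℕ), (R.map (Int.castRingHom ℝ)).eval (n : ℝ) =
      ((R.eval (n : ℤ) : ℤ) : ℝ) := by
    intro R n
    have := Polynomial.eval_intCast_map (Int.castRingHom ℝ) R (n : ℤ)
    simpa using this
  simp only [eq_intCast, Int.cast_pow] at h2
  refine h2.congr fun n => ?_
  simp only [Function.comp, h3]
  simp [hP, hQ]

/-- Appendix B, balanced case: convergence error
`|L − pₙ/qₙ| ≐ (B/α²)ⁿ`. With `deg a = d`, `deg b = 2d`, positive leading
coefficients `A, B`, positive values on positive integers, and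
`α = (A + √(A² + 4B))/2`, the limit `L` of the convergents exists, differs from
every convergent, and `lim (1/n)·ln|L − pₙ/qₙ| = ln B − 2 ln α`. -/
theorem stmt_18 (d : ℕ) (hd : 1 ≤ d) (a b : Polynomial ℤ)
    (hda : a.natDegree = d) (hdb : b.natDegree = 2 * d)
    (hA : 0 < a.leadingCoeff) (hB : 0 < b.leadingCoeff)
    (hapos : ∀ n : ℕ, 1 ≤ n → 0 < a.eval (n : ℤ))
    (hbpos : ∀ n : ℕ, 1 ≤ n → 0 < b.eval (n : ℤ))
    (p q : ℕ → ℤ)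
    (hp0 : p 0 = a.eval 0) (hq0 : q 0 = 1)
    (hp1 : p 1 = a.eval 1 * p 0 + b.eval 1 * 1)
    (hq1 : q 1 = a.eval 1 * q 0 + b.eval 1 * 0)
    (hprec : ∀ n : ℕ, p (n + 2) = a.eval ((n : ℤ) + 2) * p (n + 1) + b.eval ((n : ℤ) + 2) * p n)
    (hqrec : ∀ n : ℕ, q (n + 2) = a.eval ((n : ℤ) + 2) * q (n + 1) + b.eval ((n : ℤ) + 2) * q n)
    (α : ℝ)
    (hα : α = ((a.leadingCoeff : ℝ) +
      Real.sqrt ((a.leadingCoeff : ℝ) ^ 2 + 4 * (b.leadingCoeff : ℝ))) / 2) :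
    ∃ L : ℝ, Tendsto (fun n : ℕ => (p n : ℝ) / (q n : ℝ)) atTop (nhds L) ∧
      (∀ n : ℕ, L ≠ (p n : ℝ) / (q n : ℝ)) ∧
      Tendsto (fun n : ℕ => (1 : ℝ) / n * Real.log |L - (p n : ℝ) / (q n : ℝ)|)
        atTop (nhds (Real.log (b.leadingCoeff : ℝ) - 2 * Real.log α)) := by
  have hAr : (0 : ℝ) < a.leadingCoeff := by exact_mod_cast hA
  have hBr : (0 : ℝ) < b.leadingCoeff := by exact_mod_cast hB
  have hlim := aux_poly a b (by rw [hdb, hda]) hA hB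
  set A : ℝ := (a.leadingCoeff : ℝ) with hAdef
  set B : ℝ := (b.leadingCoeff : ℝ) with hBdef
  have hsq : Real.sqrt (A ^ 2 + 4 * B) ^ 2 = A ^ 2 + 4 * B := Real.sq_sqrt (by positivity)
  have hαA : A < α := by
    have : A < Real.sqrt (A ^ 2 + 4 * B) := Real.lt_sqrt_of_sq_lt (by linarith)
    rw [hα]; linarith
  have hα2 : α ^ 2 = A * α + B := by rw [hα]; linear_combination hsq / 4
  have hα0 : 0 < α := hAr.trans hαA
  have hapos1 : ∀ n : ℕ, (0 : ℝ) < ((a.eval ((n : ℤ) + 1) : ℤ) : ℝ) := fun n => by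
    have := hapos (n + 1) (by omega)
    push_cast at this
    exact_mod_cast this
  have hapos2 : ∀ n : ℕ, (0 : ℝ) < ((a.eval ((n : ℤ) + 2) : ℤ) : ℝ) := fun n => by
    have := hapos (n + 2) (by omega)
    push_cast at this
    exact_mod_cast this
  have hbpos1 : ∀ n : ℕ, (0 : ℝ) < ((b.eval ((n : ℤ) + 1) : ℤ) : ℝ) := fun n => by
    have := hbpos (n + 1) (by omega)
    push_cast at this
    exact_mod_cast this
  have hbpos2 : ∀ n : ℕ, (0 : ℝ) < ((b.eval ((n : ℤ) + 2) : ℤ) : ℝ) := fun n => by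
    have := hbpos (n + 2) (by omega)
    push_cast at this
    exact_mod_cast this
  have hQ : ∀ n : ℕ, (q (n + 2) : ℝ) = ((a.eval ((n : ℤ) + 2) : ℤ) : ℝ) * (q (n + 1) : ℝ) +
      ((b.eval ((n : ℤ) + 2) : ℤ) : ℝ) * (q n : ℝ) := fun n => by exact_mod_cast hqrec n
  have hP : ∀ n : ℕ, (p (n + 2) : ℝ) = ((a.eval ((n : ℤ) + 2) : ℤ) : ℝ) * (p (n + 1) : ℝ) +
      ((b.eval ((n : ℤ) + 2) : ℤ) : ℝ) * (p n : ℝ) := fun n => by exact_mod_cast hprec n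
  have hq1' : (q 1 : ℝ) = ((a.eval ((0 : ℕ) + 1 : ℤ) : ℤ) : ℝ) := by
    rw [hq1, hq0]; simp
  have hqpos2 : ∀ n : ℕ, (0 : ℝ) < (q n : ℝ) ∧ (0 : ℝ) < (q (n + 1) : ℝ) := by
    intro n
    induction n with
    | zero =>
      refine ⟨by rw [hq0]; simp, ?_⟩
      rw [zero_add, hq1']
      exact hapos1 0
    | succ n ih =>
      refine ⟨ih.2, ?_⟩
      have := hapos2 n
      have := hbpos2 n
      have := ih.1
      have := ih.2
      rw [show n + 1 + 1 = n + 2 from rfl, hQ]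
      positivity
  have hqpos : ∀ n : ℕ, (0 : ℝ) < (q n : ℝ) := fun n => (hqpos2 n).1
  -- the normalised ratio
  set s : ℕ → ℝ := fun n => (q (n + 1) : ℝ) / ((q n : ℝ) * ((a.eval ((n : ℤ) + 1) : ℤ) : ℝ)) with hs
  have hslim : Tendsto s atTop (nhds (α / A)) := by
    refine aux_ratio s (t := α / A) ((one_lt_div hAr).2 hαA) (fun n => ?_) ?_ (fun n => ?_)
      (β := fun n : ℕ => ((b.eval ((n : ℤ) + 2) : ℤ) : ℝ) /
      (((a.eval ((n : ℤ) + 2) : ℤ) : ℝ) * ((a.eval ((n : ℤ) + 1) : ℤ) : ℝ))) ?_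
    · exact div_pos (hbpos2 n) (mul_pos (hapos2 n) (hapos1 n))
    · have := hapos1 0
      simp only [hs]
      rw [zero_add, hq1', hq0]
      rw [Int.cast_one, one_mul]
      exact div_self this.ne'
    · have h1 := hapos1 n
      have h2 := hapos2 n
      have h3 := hqpos n
      have h4 := hqpos (n + 1)
      simp only [hs]
      rw [show n + 1 + 1 = n + 2 from rfl, hQ,
        show (((n + 1 : ℕ) : ℤ) + 1) = (n : ℤ) + 2 by push_cast; ring]
      field_simp
    · have : α / A * (α / A - 1) = B / A ^ 2 := by
        field_simp
        linarith
      rw [this]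
      exact hlim
  -- the increments
  set pr : ℕ → ℝ := fun n => ∏ k ∈ Finset.range (n + 1), ((b.eval ((k : ℤ) + 1) : ℤ) : ℝ) with hpr
  have hprpos : ∀ n, 0 < pr n := fun n => Finset.prod_pos fun k _ => hbpos1 k
  have hprs : ∀ n, pr (n + 1) = pr n * ((b.eval ((n : ℤ) + 2) : ℤ) : ℝ) := by
    intro n
    simp only [hpr]
    rw [Finset.prod_range_succ _ (n + 1),
      show (((n + 1 : ℕ) : ℤ) + 1) = (n : ℤ) + 2 by push_cast; ring]
  have hcas : ∀ n, (p (n + 1) : ℝ) * q n - p n * q (n + 1) = (-1) ^ n * pr n := by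
    intro n
    induction n with
    | zero =>
      simp only [hpr, zero_add, hp1, hq1, hq0]
      simp
      ring
    | succ n ih =>
      rw [show n + 1 + 1 = n + 2 from rfl, hQ, hP, hprs, pow_succ]
      linear_combination (-((b.eval ((n : ℤ) + 2) : ℤ) : ℝ)) * ih
  set c : ℕ → ℝ := fun n => pr n / ((q n : ℝ) * q (n + 1)) with hc
  have hcpos : ∀ n, 0 < c n := fun n => div_pos (hprpos n) (mul_pos (hqpos n) (hqpos (n + 1)))
  have hratio : ∀ n, c (n + 1) / c n = 1 - 1 / s (n + 1) := by
    intro n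
    have h2 := hapos2 n
    have h3 := hqpos n
    have h4 := hqpos (n + 1)
    have h5 := hqpos (n + 2)
    have h6 := hprpos n
    simp only [hc, hs]
    rw [show n + 1 + 1 = n + 2 from rfl, hprs,
      show (((n + 1 : ℕ) : ℤ) + 1) = (n : ℤ) + 2 by push_cast; ring]
    field_simp
    linarith [hQ n]
  have hspos : ∀ n, 0 < s n := fun n => div_pos (hqpos _) (mul_pos (hqpos n) (hapos1 n))
  have hrlim : Tendsto (fun n => c (n + 1) / c n) atTop (nhds (B / α ^ 2)) := by
    have h1 : Tendsto (fun n => 1 - 1 / s (n + 1)) atTop (nhds (1 - 1 / (α / A))) :=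
      (Tendsto.div tendsto_const_nhds ((tendsto_add_atTop_iff_nat 1).2 hslim)
        (div_pos hα0 hAr).ne').const_sub 1
    have h2 : 1 - 1 / (α / A) = B / α ^ 2 := by
      field_simp
      linarith
    rw [h2] at h1
    exact h1.congr fun n => (hratio n).symm
  have hfin := aux_alt (fun n => (p n : ℝ) / (q n : ℝ)) c (B / α ^ 2) (by positivity)
    (by rw [div_lt_one (by positivity), hα2]; nlinarith) hcpos
    (fun n => by
      have h1 : c (n + 1) / c n < 1 := by
        rw [hratio]
        have : 0 < 1 / s (n + 1) := by have := hspos (n + 1); positivity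
        linarith
      exact (div_lt_one (hcpos n)).1 h1)
    (fun n => by
      have h3 := hqpos n
      have h4 := hqpos (n + 1)
      simp only [hc]
      rw [← mul_div_assoc, ← hcas]
      field_simp)
    hrlim
  rw [Real.log_div hBr.ne' (by positivity), Real.log_pow] at hfin
  exact_mod_cast hfin
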